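/- Let n be a positive integer, let w be a random vector in ℝⁿ whose law is the product measure of n independent standard one-dimensional Gaussian measures N(0,1), let L be a real n×n matrix, let μ ∈ ℝⁿ, and set Σ = L·Lᵀ. Let A be a symmetric real n×n matrix and let q(w) = (μ + L·w)ᵀ A (μ + L·w). Then the variance of q equals 2·tr(AΣAΣ) + 4·μᵀAΣAμ; i.e. ∫ (q(w) − (tr(AΣ) + μᵀAμ))² dP(w) = 2·tr(A·Σ·A·Σ) + 4·μᵀ·A·Σ·A·μ. -/

import Mathlib

open MeasureTheory ProbabilityTheory Matrix

lemma aux_moments :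
    (∫ x : ℝ, x ^ 1 ∂gaussianReal 0 1 = 0) ∧ (∫ x : ℝ, x ^ 2 ∂gaussianReal 0 1 = 1) ∧
    (∫ x : ℝ, x ^ 3 ∂gaussianReal 0 1 = 0) ∧ (∫ x : ℝ, x ^ 4 ∂gaussianReal 0 1 = 3) := by
  have key : ∀ k : ℕ, ∫ x : ℝ, x ^ k ∂gaussianReal 0 1
      = iteratedDeriv k (fun t : ℝ => Real.exp (t ^ 2 / 2)) 0 := by
    intro k
    have h := iteratedDeriv_mgf_zero (X := id) (μ := gaussianReal 0 1) (by simp) k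
    rw [mgf_id_gaussianReal] at h
    simp only [zero_mul, zero_add, NNReal.coe_one, one_mul] at h
    rw [h]
    rfl
  have hE : ∀ t : ℝ, HasDerivAt (fun t : ℝ => Real.exp (t ^ 2 / 2))
      (Real.exp (t ^ 2 / 2) * t) t := by
    intro t
    have h := (((hasDerivAt_id t).pow 2).div_const 2).exp
    refine h.congr_deriv ?_
    simp
  have hP : ∀ (p p' : ℝ → ℝ), (∀ t, HasDerivAt p (p' t) t) →
      deriv (fun t => p t * Real.exp (t ^ 2 / 2))
        = fun t => (p' t + t * p t) * Real.exp (t ^ 2 / 2) := by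
    intro p p' hp
    ext t
    rw [((hp t).fun_mul (hE t)).deriv]
    ring
  have d1 : iteratedDeriv 1 (fun t : ℝ => Real.exp (t ^ 2 / 2))
      = fun t => t * Real.exp (t ^ 2 / 2) := by
    rw [iteratedDeriv_one]
    ext t
    rw [(hE t).deriv]; ring
  have d2 : iteratedDeriv 2 (fun t : ℝ => Real.exp (t ^ 2 / 2))
      = fun t => (1 + t * t) * Real.exp (t ^ 2 / 2) := by
    rw [iteratedDeriv_succ, d1, hP (fun t => t) (fun _ => 1) (fun t => hasDerivAt_id t)]
  have d3 : iteratedDeriv 3 (fun t : ℝ => Real.exp (t ^ 2 / 2))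
      = fun t => ((t + t) + t * (1 + t * t)) * Real.exp (t ^ 2 / 2) := by
    rw [iteratedDeriv_succ, d2, hP (fun t => 1 + t * t) (fun t => t + t)]
    intro t
    refine (((hasDerivAt_id t).mul (hasDerivAt_id t)).const_add 1).congr_deriv ?_
    simp
  have d4 : iteratedDeriv 4 (fun t : ℝ => Real.exp (t ^ 2 / 2))
      = fun t => ((3 + 3 * t ^ 2) + t * ((t + t) + t * (1 + t * t))) * Real.exp (t ^ 2 / 2) := by
    rw [iteratedDeriv_succ, d3, hP (fun t => (t + t) + t * (1 + t * t)) (fun t => 3 + 3 * t ^ 2)]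
    intro t
    have h := hasDerivAt_id' t
    refine ((h.add h).add (h.mul ((h.mul h).const_add 1))).congr_deriv ?_
    simp
    ring
  refine ⟨?_, ?_, ?_, ?_⟩
  · rw [key, d1]; simp
  · rw [key, d2]; simp
  · rw [key, d3]; simp
  · rw [key, d4]; simp

lemma aux_int_pow (k : ℕ) : Integrable (fun x : ℝ => x ^ k) (gaussianReal 0 1) :=
  integrable_pow_of_mem_interior_integrableExpSet (X := id) (by simp) k

lemma aux_mono {n : ℕ} (c : Fin n → ℕ) :
    Integrable (fun w : Fin n → ℝ => ∏ m, w m ^ c m)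
      (Measure.pi fun _ : Fin n => gaussianReal 0 1) ∧
    ∫ w : Fin n → ℝ, ∏ m, w m ^ c m ∂(Measure.pi fun _ : Fin n => gaussianReal 0 1)
      = ∏ m, ∫ x : ℝ, x ^ c m ∂gaussianReal 0 1 :=
  ⟨Integrable.fintype_prod (f := fun m x => x ^ c m) fun m => aux_int_pow (c m),
    integral_fintype_prod_eq_prod (fun m (x : ℝ) => x ^ c m)⟩

/-- indicator exponent -/
def auxd {n : ℕ} (i m : Fin n) : ℕ := if m = i then 1 else 0

lemma aux_prod {n : ℕ} (w : Fin n → ℝ) (i : Fin n) : ∏ m, w m ^ auxd i m = w i := by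
  simp [auxd]

lemma aux_prod4 {n : ℕ} (i j k l : Fin n) : (fun w : Fin n → ℝ => w i * w j * w k * w l)
    = fun w => ∏ m, w m ^ (auxd i m + auxd j m + auxd k m + auxd l m) := by
  ext w; simp only [pow_add, Finset.prod_mul_distrib, aux_prod]

lemma aux_prod3 {n : ℕ} (i j k : Fin n) : (fun w : Fin n → ℝ => w i * w j * w k)
    = fun w => ∏ m, w m ^ (auxd i m + auxd j m + auxd k m) := by
  ext w; simp only [pow_add, Finset.prod_mul_distrib, aux_prod]

lemma aux_prod2 {n : ℕ} (i j : Fin n) : (fun w : Fin n → ℝ => w i * w j)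
    = fun w => ∏ m, w m ^ (auxd i m + auxd j m) := by
  ext w; simp only [pow_add, Finset.prod_mul_distrib, aux_prod]

lemma aux_prod1 {n : ℕ} (i : Fin n) : (fun w : Fin n → ℝ => w i)
    = fun w => ∏ m, w m ^ (auxd i m) := by
  ext w; simp only [aux_prod]

lemma aux_odd {n : ℕ} (c : Fin n → ℕ) (i : Fin n) (h : c i = 1 ∨ c i = 3) :
    ∏ m, ∫ x : ℝ, x ^ c m ∂gaussianReal 0 1 = 0 := by
  refine Finset.prod_eq_zero (Finset.mem_univ i) ?_
  rcases h with h | h <;> rw [h]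
  exacts [aux_moments.1, aux_moments.2.2.1]

lemma aux_even {n : ℕ} (c : Fin n → ℕ) (h : ∀ m, c m = 0 ∨ c m = 2) :
    ∏ m, ∫ x : ℝ, x ^ c m ∂gaussianReal 0 1 = 1 := by
  refine Finset.prod_eq_one fun i _ => ?_
  rcases h i with h | h <;> rw [h]
  exacts [by simp, aux_moments.2.1]

lemma aux_four {n : ℕ} (c : Fin n → ℕ) (i : Fin n) (h : c i = 4) (h0 : ∀ m, m ≠ i → c m = 0) :
    ∏ m, ∫ x : ℝ, x ^ c m ∂gaussianReal 0 1 = 3 := by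
  rw [Finset.prod_eq_single i, h, aux_moments.2.2.2]
  · intro m _ hm
    rw [h0 m hm]; simp
  · simp

lemma aux_E1 {n : ℕ} (i : Fin n) :
    ∫ w : Fin n → ℝ, w i ∂(Measure.pi fun _ : Fin n => gaussianReal 0 1) = 0 := by
  rw [aux_prod1, (aux_mono _).2]
  exact aux_odd _ i (by simp [auxd])

lemma aux_E2 {n : ℕ} (i j : Fin n) :
    ∫ w : Fin n → ℝ, w i * w j ∂(Measure.pi fun _ : Fin n => gaussianReal 0 1)
      = (1 : Matrix (Fin n) (Fin n) ℝ) i j := by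
  rw [aux_prod2, (aux_mono _).2]
  by_cases h : i = j
  · subst h
    rw [aux_even _ (fun m => by simp only [auxd]; split_ifs <;> simp)]
    simp
  · rw [aux_odd _ i (by simp [auxd, h])]
    simp [h]

lemma aux_E3 {n : ℕ} (i j k : Fin n) :
    ∫ w : Fin n → ℝ, w i * w j * w k ∂(Measure.pi fun _ : Fin n => gaussianReal 0 1) = 0 := by
  rw [aux_prod3, (aux_mono _).2]
  by_cases h : i = j
  · subst h
    exact aux_odd _ k (by simp only [auxd]; split_ifs <;> simp_all)
  · by_cases h2 : i = k
    · subst h2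
      exact aux_odd _ j (by simp only [auxd]; split_ifs <;> simp_all)
    · exact aux_odd _ i (by simp [auxd, h, h2])

lemma aux_E4 {n : ℕ} (i j k l : Fin n) :
    ∫ w : Fin n → ℝ, w i * w j * w k * w l ∂(Measure.pi fun _ : Fin n => gaussianReal 0 1)
      = (1 : Matrix (Fin n) (Fin n) ℝ) i j * (1 : Matrix (Fin n) (Fin n) ℝ) k l
      + (1 : Matrix (Fin n) (Fin n) ℝ) i k * (1 : Matrix (Fin n) (Fin n) ℝ) j l
      + (1 : Matrix (Fin n) (Fin n) ℝ) i l * (1 : Matrix (Fin n) (Fin n) ℝ) j k := by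
  have pair : ∀ i k l : Fin n,
      ∏ m, ∫ x : ℝ, x ^ (auxd i m + auxd i m + auxd k m + auxd l m) ∂gaussianReal 0 1
      = (1 : Matrix (Fin n) (Fin n) ℝ) k l + 2 * ((1 : Matrix (Fin n) (Fin n) ℝ) i k
        * (1 : Matrix (Fin n) (Fin n) ℝ) i l) := by
    intro i k l
    by_cases hkl : k = l
    · subst hkl
      by_cases hik : i = k
      · subst hik
        rw [aux_four _ i (by simp [auxd]) (fun m hm => by simp [auxd, hm])]
        norm_num
      · rw [aux_even _ (fun m => by simp only [auxd]; split_ifs <;> simp_all)]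
        simp [hik]
    · by_cases hik : i = k
      · subst hik
        rw [aux_odd _ l (by simp [auxd, hkl, Ne.symm hkl])]
        simp [hkl]
      · rw [aux_odd _ k (by simp [auxd, hkl, Ne.symm hik])]
        simp [hkl, hik]
  rw [aux_prod4, (aux_mono _).2]
  by_cases hij : i = j
  · subst hij
    rw [pair]
    simp only [Matrix.one_apply_eq]
    ring
  by_cases hik : i = k
  · subst hik
    have := pair i j l
    rw [show (∏ m, ∫ x : ℝ, x ^ (auxd i m + auxd j m + auxd i m + auxd l m) ∂gaussianReal 0 1)
      = ∏ m, ∫ x : ℝ, x ^ (auxd i m + auxd i m + auxd j m + auxd l m) ∂gaussianReal 0 1 from by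
        simp only [add_right_comm _ (auxd j _) (auxd i _)], this]
    simp [hij, Ne.symm hij]
  by_cases hil : i = l
  · subst hil
    have := pair i j k
    rw [show (∏ m, ∫ x : ℝ, x ^ (auxd i m + auxd j m + auxd k m + auxd i m) ∂gaussianReal 0 1)
      = ∏ m, ∫ x : ℝ, x ^ (auxd i m + auxd i m + auxd j m + auxd k m) ∂gaussianReal 0 1 from by
        refine Finset.prod_congr rfl fun m _ => ?_
        rw [show auxd i m + auxd j m + auxd k m + auxd i m
          = auxd i m + auxd i m + auxd j m + auxd k m by ring], this]
    simp [hij, hik]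
  rw [aux_odd _ i (by simp [auxd, hij, hik, hil])]
  simp [hij, hik, hil]

/-- The variance computation for the standard Gaussian vector. -/
lemma aux_std {n : ℕ} (B : Matrix (Fin n) (Fin n) ℝ) (hB : B.IsSymm) (b : Fin n → ℝ) :
    ∫ w : Fin n → ℝ, (w ⬝ᵥ B *ᵥ w + 2 * (b ⬝ᵥ w) - B.trace) ^ 2
        ∂(Measure.pi fun _ : Fin n => gaussianReal 0 1)
      = 2 * (B * B).trace + 4 * (b ⬝ᵥ b) := by
  set P := (Measure.pi fun _ : Fin n => gaussianReal 0 1) with hP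
  let D : Fin n → Fin n → ℝ := fun i j => (1 : Matrix (Fin n) (Fin n) ℝ) i j
  have i1 : ∀ i, Integrable (fun w : Fin n → ℝ => w i) P := fun i => by
    rw [aux_prod1]; exact (aux_mono _).1
  have i2 : ∀ i j, Integrable (fun w : Fin n → ℝ => w i * w j) P := fun i j => by
    rw [aux_prod2]; exact (aux_mono _).1
  have i3 : ∀ i j k, Integrable (fun w : Fin n → ℝ => w i * w j * w k) P := fun i j k => by
    rw [aux_prod3]; exact (aux_mono _).1
  have i4 : ∀ i j k l, Integrable (fun w : Fin n → ℝ => w i * w j * w k * w l) P :=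
    fun i j k l => by
    rw [aux_prod4]; exact (aux_mono _).1
  have q : ∀ w : Fin n → ℝ, w ⬝ᵥ B *ᵥ w + 2 * (b ⬝ᵥ w) - B.trace
      = (∑ i, ∑ j, B i j * (w i * w j - D i j)) + ∑ i, 2 * b i * w i := by
    intro w
    have hT : B.trace = ∑ i, ∑ j, B i j * D i j := by
      simp [D, Matrix.trace, Matrix.one_apply]
    rw [hT]
    simp only [mul_sub, Finset.sum_sub_distrib, dotProduct, mulVec, Finset.mul_sum]
    have h1 : ∀ i j, w i * (B i j * w j) = B i j * (w i * w j) := fun i j => by ring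
    simp only [h1, mul_assoc]
    ring
  have sq : ∀ w : Fin n → ℝ, (w ⬝ᵥ B *ᵥ w + 2 * (b ⬝ᵥ w) - B.trace) ^ 2
      = (∑ i, ∑ j, ∑ k, ∑ l, B i j * B k l * (w i * w j * w k * w l - D i j * (w k * w l)
          - D k l * (w i * w j) + D i j * D k l))
        + (∑ i, ∑ j, ∑ k, 4 * B i j * b k * (w i * w j * w k - D i j * w k))
        + ∑ i, ∑ j, 4 * b i * b j * (w i * w j) := by
    intro w
    rw [q w, add_sq]
    congr 1
    · congr 1
      · simp only [sq, Finset.sum_mul, Finset.mul_sum]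
        refine Finset.sum_congr rfl fun i _ => Finset.sum_congr rfl fun j _ =>
          Finset.sum_congr rfl fun k _ => Finset.sum_congr rfl fun l _ => ?_
        ring
      · rw [mul_assoc]
        simp only [Finset.sum_mul]
        simp only [Finset.mul_sum]
        refine Finset.sum_congr rfl fun i _ => Finset.sum_congr rfl fun j _ =>
          Finset.sum_congr rfl fun k _ => ?_
        ring
    · simp only [sq, Finset.sum_mul, Finset.mul_sum]
      refine Finset.sum_congr rfl fun i _ => Finset.sum_congr rfl fun j _ => ?_
      ring
  have j4 : ∀ i j k l, Integrable (fun w : Fin n → ℝ => B i j * B k l *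
      (w i * w j * w k * w l - D i j * (w k * w l)
          - D k l * (w i * w j) + D i j * D k l)) P := fun i j k l =>
    ((((i4 i j k l).sub ((i2 k l).const_mul _)).sub ((i2 i j).const_mul _)).add
      (integrable_const _)).const_mul _
  have j3 : ∀ i j k, Integrable (fun w : Fin n → ℝ => 4 * B i j * b k *
      (w i * w j * w k - D i j * w k)) P := fun i j k =>
    ((i3 i j k).sub ((i1 k).const_mul _)).const_mul _
  have j2 : ∀ i j, Integrable (fun w : Fin n → ℝ => 4 * b i * b j * (w i * w j)) P :=
    fun i j => (i2 i j).const_mul _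
  have e4 : ∀ i j k l, ∫ w : Fin n → ℝ, B i j * B k l *
      (w i * w j * w k * w l - D i j * (w k * w l)
          - D k l * (w i * w j) + D i j * D k l) ∂P
      = B i j * B k l * (D i k * D j l + D i l * D j k) := by
    intro i j k l
    have r1 : Integrable (fun w : Fin n → ℝ => w i * w j * w k * w l - D i j * (w k * w l)) P :=
      (i4 i j k l).sub ((i2 k l).const_mul _)
    have r2 : Integrable (fun w : Fin n → ℝ => w i * w j * w k * w l - D i j * (w k * w l)
          - D k l * (w i * w j)) P := r1.sub ((i2 i j).const_mul _)
    rw [integral_const_mul, integral_add r2 (integrable_const _),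
      integral_sub r1 ((i2 i j).const_mul _), integral_sub (i4 i j k l) ((i2 k l).const_mul _),
      integral_const_mul, integral_const_mul, aux_E4, aux_E2, aux_E2, integral_const]
    simp only [D, probReal_univ, smul_eq_mul]
    ring
  have e3 : ∀ i j k, ∫ w : Fin n → ℝ, 4 * B i j * b k *
      (w i * w j * w k - D i j * w k) ∂P = 0 := by
    intro i j k
    rw [integral_const_mul, integral_sub (i3 i j k) ((i1 k).const_mul _), integral_const_mul,
      aux_E3, aux_E1]
    simp
  have e2 : ∀ i j, ∫ w : Fin n → ℝ, 4 * b i * b j * (w i * w j) ∂P = 4 * b i * b j * D i j := by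
    intro i j
    rw [integral_const_mul, aux_E2]
  simp only [sq]
  have I4 := fun i j k => integrable_finsetSum Finset.univ (fun l _ => j4 i j k l)
  have I4' := fun i j => integrable_finsetSum Finset.univ (fun k _ => I4 i j k)
  have I4'' := fun i => integrable_finsetSum Finset.univ (fun j _ => I4' i j)
  have I3 := fun i j => integrable_finsetSum Finset.univ (fun k _ => j3 i j k)
  have I3' := fun i => integrable_finsetSum Finset.univ (fun j _ => I3 i j)
  have I2 := fun i => integrable_finsetSum Finset.univ (fun j _ => j2 i j)
  have K4 := integrable_finsetSum Finset.univ (fun i _ => I4'' i)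
  have K3 := integrable_finsetSum Finset.univ (fun i _ => I3' i)
  have K2 := integrable_finsetSum Finset.univ (fun i _ => I2 i)
  have K43 := K4.add K3
  simp only [Pi.add_def] at K43
  rw [integral_add K43 K2, integral_add K4 K3]
  have s4 : ∫ w : Fin n → ℝ, (∑ i, ∑ j, ∑ k, ∑ l, B i j * B k l *
      (w i * w j * w k * w l - D i j * (w k * w l)
          - D k l * (w i * w j) + D i j * D k l)) ∂P = 2 * (B * B).trace := by
    rw [integral_finsetSum _ (fun i _ => I4'' i)]
    simp_rw [integral_finsetSum _ (fun j _ => I4' _ j), integral_finsetSum _ (fun k _ => I4 _ _ k),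
      integral_finsetSum _ (fun l _ => j4 _ _ _ l), e4]
    simp only [D, Matrix.one_apply, mul_add, Finset.sum_add_distrib, Matrix.trace, Matrix.diag,
      Matrix.mul_apply]
    simp
    have hs : ∀ i j, B j i = B i j := fun i j => hB.apply i j
    rw [two_mul]
    congr 1
    refine Finset.sum_congr rfl fun i _ => Finset.sum_congr rfl fun j _ => ?_
    rw [hs i j]
  have s3 : ∫ w : Fin n → ℝ, (∑ i, ∑ j, ∑ k, 4 * B i j * b k *
      (w i * w j * w k - D i j * w k)) ∂P = 0 := by
    rw [integral_finsetSum _ (fun i _ => I3' i)]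
    simp_rw [integral_finsetSum _ (fun j _ => I3 _ j),
      integral_finsetSum _ (fun l _ => j3 _ _ l), e3]
    simp
  have s2 : ∫ w : Fin n → ℝ, (∑ i, ∑ j, 4 * b i * b j * (w i * w j)) ∂P = 4 * (b ⬝ᵥ b) := by
    rw [integral_finsetSum _ (fun i _ => I2 i)]
    simp_rw [integral_finsetSum _ (fun j _ => j2 _ j), e2]
    simp [D, Matrix.one_apply, dotProduct, Finset.mul_sum, mul_assoc]
  rw [s4, s3, s2, add_zero]

/-- Variance of a Gaussian quadratic form: for a Gaussian vector
`z = μ + L·w` with `w` standard Gaussian and `Σ = L·Lᵀ`,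
`Var[zᵀAz] = 2 tr(AΣAΣ) + 4 μᵀAΣAμ` for symmetric `A`. -/
theorem variance_gaussian_quadratic_form
    (n : ℕ) (hn : 0 < n)
    (L : Matrix (Fin n) (Fin n) ℝ) (μ : Fin n → ℝ)
    (A : Matrix (Fin n) (Fin n) ℝ) (hA : A.IsSymm) :
    ∫ w : Fin n → ℝ,
        ((μ + L.mulVec w) ⬝ᵥ A.mulVec (μ + L.mulVec w)
          - ((A * (L * Lᵀ)).trace + μ ⬝ᵥ A.mulVec μ)) ^ 2
        ∂(Measure.pi fun _ : Fin n => gaussianReal 0 1)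
      = 2 * (A * (L * Lᵀ) * A * (L * Lᵀ)).trace
        + 4 * (μ ⬝ᵥ (A * (L * Lᵀ) * A).mulVec μ) := by
  have hA' : Aᵀ = A := hA
  have hB : (Lᵀ * A * L).IsSymm := by
    unfold Matrix.IsSymm
    simp [Matrix.transpose_mul, hA', Matrix.mul_assoc]
  have h := aux_std (Lᵀ * A * L) hB (Lᵀ *ᵥ (A *ᵥ μ))
  have t1 : (A * (L * Lᵀ)).trace = (Lᵀ * A * L).trace := by
    rw [← Matrix.mul_assoc, Matrix.trace_mul_comm, Matrix.mul_assoc]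
  have t2 : (A * (L * Lᵀ) * A * (L * Lᵀ)).trace = (Lᵀ * A * L * (Lᵀ * A * L)).trace := by
    rw [← Matrix.mul_assoc (A * (L * Lᵀ) * A), Matrix.trace_mul_comm]
    simp only [Matrix.mul_assoc]
  have t3 : μ ⬝ᵥ (A * (L * Lᵀ) * A).mulVec μ = (Lᵀ *ᵥ (A *ᵥ μ)) ⬝ᵥ (Lᵀ *ᵥ (A *ᵥ μ)) := by
    simp only [← Matrix.mulVec_mulVec]
    rw [Matrix.dotProduct_mulVec μ A, ← Matrix.mulVec_transpose, hA',
      Matrix.dotProduct_mulVec _ L, ← Matrix.mulVec_transpose]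
  rw [t2, t3, ← h]
  refine integral_congr_ae (Filter.Eventually.of_forall fun w => ?_)
  have u1 : (L *ᵥ w) ⬝ᵥ A *ᵥ (L *ᵥ w) = w ⬝ᵥ (Lᵀ * A * L) *ᵥ w := by
    simp only [← Matrix.mulVec_mulVec]
    rw [Matrix.dotProduct_mulVec w Lᵀ, Matrix.vecMul_transpose]
  have u2 : (Lᵀ *ᵥ (A *ᵥ μ)) ⬝ᵥ w = (A *ᵥ μ) ⬝ᵥ (L *ᵥ w) := by
    rw [Matrix.dotProduct_mulVec, Matrix.mulVec_transpose]
  have u3 : μ ⬝ᵥ A *ᵥ (L *ᵥ w) = (A *ᵥ μ) ⬝ᵥ (L *ᵥ w) := by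
    rw [Matrix.dotProduct_mulVec, ← Matrix.mulVec_transpose, hA']
  have u4 : (L *ᵥ w) ⬝ᵥ A *ᵥ μ = (A *ᵥ μ) ⬝ᵥ (L *ᵥ w) := dotProduct_comm _ _
  simp only [Matrix.mulVec_add, add_dotProduct, dotProduct_add]
  rw [u1, u2, u3, u4, t1]
  ring
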